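/- arXiv:2311.01891 — 4 statements merged into one kernel-verified Lean document; each statement's English description precedes it below -/
import Mathlib

section
/- Let T>0, λ>0 and c>0. Let y : [0,T] → [0,∞) be differentiable and satisfy y'(t) ≤ 2·λ·( y(t)^{1/2} − c·y(t)/(1 + (c/2)·y(t)^{1/2}) ) for all t ∈ [0,T]. Then for all t ∈ [0,T]: y(t) ≤ max{ y(0), 4/c² }. -/
open Real Set

/-- Comparison-principle estimate for the energy differential inequality of the
Vlasov-Stokes equation under a smallness condition: the damping term is weakened by a
factor `1 / (1 + (c/2) * sqrt y)`, yet the quantity stays bounded by `max (y 0) (4 / c ^ 2)`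
uniformly in `lam`. -/
theorem energy_bound_weakened_damping
    (T lam c : ℝ) (hT : 0 < T) (hlam : 0 < lam) (hc : 0 < c)
    (y y' : ℝ → ℝ)
    (hy0 : ∀ t ∈ Icc (0:ℝ) T, 0 ≤ y t)
    (hdy : ∀ t ∈ Icc (0:ℝ) T, HasDerivAt y (y' t) t)
    (hiy : ∀ t ∈ Icc (0:ℝ) T,
      y' t ≤ 2 * lam * (Real.sqrt (y t) - c * y t / (1 + c / 2 * Real.sqrt (y t)))) :
    ∀ t ∈ Icc (0:ℝ) T, y t ≤ max (y 0) (4 / c ^ 2) := by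
  intro t ht
  refine le_of_forall_pos_le_add fun ε hε => ?_
  refine image_le_of_deriv_right_lt_deriv_boundary (f := y) (f' := y') (a := 0) (b := T)
    (B := fun _ => max (y 0) (4 / c ^ 2) + ε) (B' := fun _ => 0)
    (fun x hx => (hdy x hx).continuousAt.continuousWithinAt)
    (fun x hx => (hdy x (Ico_subset_Icc_self hx)).hasDerivWithinAt)
    (by linarith [le_max_left (y 0) (4 / c ^ 2)])
    (fun x => hasDerivAt_const x _) ?_ ht
  intro x hx hxe
  have hx' := Ico_subset_Icc_self hx
  refine lt_of_le_of_lt (hiy x hx') ?_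
  have hgt : 4 / c ^ 2 < y x := by
    have := le_max_right (y 0) (4 / c ^ 2)
    linarith
  have hsq : √(y x) ^ 2 = y x := Real.sq_sqrt (hy0 x hx')
  have hs : 2 / c < √(y x) := by
    apply Real.lt_sqrt_of_sq_lt
    rw [div_pow]
    norm_num
    exact hgt
  have hs0 : 0 < √(y x) := lt_trans (by positivity) hs
  have hcs : 2 < √(y x) * c := (div_lt_iff₀ hc).1 hs
  refine mul_neg_of_pos_of_neg (by positivity) ?_
  rw [sub_neg, lt_div_iff₀ (by positivity)]
  nlinarith [mul_lt_mul_of_pos_left hcs hs0]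
end

section
/- Let T>0, let g ∈ ℝ³, let α : [0,T] → [0,∞) be continuous, and let u : [0,T] × ℝ³ → ℝ³ be such that for every s ∈ [0,T] the map u(s,·) is Lipschitz with Lipschitz constant at most α(s). Let λ ≥ 4·(1 + sup_{s∈[0,T]} α(s)). Fix t ∈ [0,T], x ∈ ℝ³ and v₁, v₂ ∈ ℝ³, and suppose that for i = 1,2 the pair (X_i, V_i) : [0,t] → ℝ³ × ℝ³ is differentiable and satisfies the characteristic system X_i'(s) = V_i(s), V_i'(s) = λ·(g + u(s, X_i(s)) − V_i(s)) for all s ∈ [0,t], with terminal conditions X_i(t) = x and V_i(t) = v_i. Then, with A(t) := exp(2·∫₀ᵗ α(s) ds), one has A(t)^{−1}·e^{λt}·|v₁ − v₂| ≤ |V₁(0) − V₂(0)| ≤ A(t)·e^{λt}·|v₁ − v₂|. In particular, the map v ↦ V(0) (the time-0 velocity of the characteristic ending at (x,v) at time t) is bi-Lipschitz. -/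
open Real Set

local notation "E3" => EuclideanSpace ℝ (Fin 3)

theorem anti_aux (t : ℝ) (f f' : ℝ → ℝ)
    (hf : ∀ s ∈ Icc (0:ℝ) t, HasDerivAt f (f' s) s) (h : ∀ s ∈ Icc (0:ℝ) t, f' s ≤ 0) :
    AntitoneOn f (Icc 0 t) := by
  apply antitoneOn_of_hasDerivWithinAt_nonpos (f' := f') (convex_Icc 0 t)
  · exact fun s hs => (hf s hs).continuousAt.continuousWithinAt
  · intro s hs
    exact (hf s (interior_subset hs)).hasDerivWithinAt
  · intro s hs
    exact h s (interior_subset hs)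

theorem my_le_of_sq {a b : ℝ} (h : a ^ 2 ≤ b ^ 2) (hb : 0 ≤ b) : a ≤ b :=
  abs_le_of_sq_le_sq' h hb |>.2

/-- Bi-Lipschitz estimate in the velocity variable for backward characteristics of the
Vlasov-Stokes equation `Ẋ = V`, `V̇ = lam • (g + u(s,X) − V)` with prescribed terminal
data `(x, vᵢ)` at time `t`. -/
theorem characteristics_velocity_biLipschitz
    (T lam : ℝ) (hT : 0 < T) (g : E3) (α : ℝ → ℝ)
    (hα : ContinuousOn α (Icc 0 T)) (hαpos : ∀ s ∈ Icc (0:ℝ) T, 0 ≤ α s)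
    (u : ℝ → E3 → E3)
    (hu : ∀ s ∈ Icc (0:ℝ) T, LipschitzWith (Real.toNNReal (α s)) (u s))
    (hlam : 4 * (1 + sSup (α '' Icc (0:ℝ) T)) ≤ lam)
    (t : ℝ) (ht : t ∈ Icc (0:ℝ) T) (x v₁ v₂ : E3)
    (X₁ V₁ X₂ V₂ : ℝ → E3)
    (hX₁ : ∀ s ∈ Icc (0:ℝ) t, HasDerivAt X₁ (V₁ s) s)
    (hV₁ : ∀ s ∈ Icc (0:ℝ) t, HasDerivAt V₁ (lam • (g + u s (X₁ s) - V₁ s)) s)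
    (hX₂ : ∀ s ∈ Icc (0:ℝ) t, HasDerivAt X₂ (V₂ s) s)
    (hV₂ : ∀ s ∈ Icc (0:ℝ) t, HasDerivAt V₂ (lam • (g + u s (X₂ s) - V₂ s)) s)
    (hXt₁ : X₁ t = x) (hVt₁ : V₁ t = v₁) (hXt₂ : X₂ t = x) (hVt₂ : V₂ t = v₂) :
    (exp (2 * ∫ s in (0:ℝ)..t, α s))⁻¹ * exp (lam * t) * ‖v₁ - v₂‖ ≤ ‖V₁ 0 - V₂ 0‖ ∧
    ‖V₁ 0 - V₂ 0‖ ≤ exp (2 * ∫ s in (0:ℝ)..t, α s) * exp (lam * t) * ‖v₁ - v₂‖ := by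
  obtain ⟨ht0, htT⟩ := ht
  have h0m : (0:ℝ) ∈ Icc (0:ℝ) t := ⟨le_refl _, ht0⟩
  have htm : t ∈ Icc (0:ℝ) t := ⟨ht0, le_refl _⟩
  have hmem : ∀ s ∈ Icc (0:ℝ) t, s ∈ Icc (0:ℝ) T := fun s hs => ⟨hs.1, hs.2.trans htT⟩
  have hαle : ∀ s ∈ Icc (0:ℝ) t, 4 * (1 + α s) ≤ lam := by
    intro s hs
    have := le_csSup (isCompact_Icc.image_of_continuousOn hα).bddAbove
      (mem_image_of_mem α (hmem s hs))
    linarith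
  have hlam0 : 0 < lam := by
    have := hαle 0 h0m
    have := hαpos 0 (hmem 0 h0m)
    linarith
  obtain ⟨X, hXd⟩ : ∃ X : ℝ → E3, X = fun s => X₁ s - X₂ s := ⟨_, rfl⟩
  obtain ⟨V, hVd⟩ : ∃ V : ℝ → E3, V = fun s => V₁ s - V₂ s := ⟨_, rfl⟩
  obtain ⟨U, hUd⟩ : ∃ U : ℝ → E3, U = fun s => u s (X₁ s) - u s (X₂ s) := ⟨_, rfl⟩
  have hX : ∀ s ∈ Icc (0:ℝ) t, HasDerivAt X (V s) s := by
    intro s hs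
    rw [hXd, hVd]
    exact (hX₁ s hs).sub (hX₂ s hs)
  have hV : ∀ s ∈ Icc (0:ℝ) t, HasDerivAt V (lam • (U s - V s)) s := by
    intro s hs
    rw [hVd, hUd]
    have he : lam • (u s (X₁ s) - u s (X₂ s) - (V₁ s - V₂ s)) =
        lam • (g + u s (X₁ s) - V₁ s) - lam • (g + u s (X₂ s) - V₂ s) := by
      rw [← smul_sub]
      congr 1
      abel
    have h := (hV₁ s hs).sub (hV₂ s hs)
    rw [← he] at h
    exact h
  have hU : ∀ s ∈ Icc (0:ℝ) t, ‖U s‖ ≤ α s * ‖X s‖ := by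
    intro s hs
    have := (hu s (hmem s hs)).dist_le_mul (X₁ s) (X₂ s)
    rw [dist_eq_norm, dist_eq_norm, Real.coe_toNNReal _ (hαpos s (hmem s hs))] at this
    rw [hUd, hXd]
    exact this
  have hXt : X t = 0 := by rw [hXd]; simp [hXt₁, hXt₂]
  have hVt : v₁ - v₂ = V t := by rw [hVd]; simp [hVt₁, hVt₂]
  have hV0 : V₁ 0 - V₂ 0 = V 0 := by rw [hVd]
  rw [hVt, hV0]
  clear hXd hVd hUd hVt hV0 hX₁ hX₂ hV₁ hV₂ hXt₁ hXt₂ hVt₁ hVt₂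
  have hVU : ∀ s ∈ Icc (0:ℝ) t, |inner ℝ (V s) (U s)| ≤ ‖V s‖ * (α s * ‖X s‖) := fun s hs =>
    (abs_real_inner_le_norm _ _).trans (mul_le_mul_of_nonneg_left (hU s hs) (norm_nonneg _))
  have hE : ∀ (c s : ℝ), HasDerivAt (fun s => exp (c * s)) (exp (c * s) * c) s := by
    intro c s
    simpa using ((hasDerivAt_id s).const_mul c).exp
  have hVsq : ∀ s ∈ Icc (0:ℝ) t, HasDerivAt (fun s => ‖V s‖ ^ 2)
      (2 * (lam * (inner ℝ (V s) (U s) - ‖V s‖ ^ 2))) s := by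
    intro s hs
    convert (hV s hs).norm_sq using 1
    rw [inner_smul_right, inner_sub_right, real_inner_self_eq_norm_sq]
  -- the key bound on the position difference
  have key : ∀ s ∈ Icc (0:ℝ) t, lam * ‖X s‖ ≤ 2 * ‖V s‖ := by
    have hA := anti_aux t (fun s => exp (lam * s) * (‖V s‖ ^ 2 - lam ^ 2 / 4 * ‖X s‖ ^ 2)) _
      (fun s hs => (hE lam s).mul ((hVsq s hs).sub ((hX s hs).norm_sq.const_mul (lam ^ 2 / 4))))
      (by
        intro s hs
        have h1 := (abs_le.1 (hVU s hs)).2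
        have h2 : inner ℝ (X s) (V s) ≥ -(‖X s‖ * ‖V s‖) :=
          (abs_le.1 (abs_real_inner_le_norm _ _)).1
        have h3 : 0 ≤ ‖V s‖ * ‖X s‖ := by positivity
        have h4 := hαle s hs
        have h6 : lam * inner ℝ (V s) (U s) ≤ lam * ((lam / 4) * (‖V s‖ * ‖X s‖)) := by
          apply mul_le_mul_of_nonneg_left _ hlam0.le
          calc _ ≤ _ := h1
            _ = α s * (‖V s‖ * ‖X s‖) := by ring
            _ ≤ _ := mul_le_mul_of_nonneg_right (by linarith) h3
        have h7 : lam ^ 2 * inner ℝ (X s) (V s) ≥ lam ^ 2 * -(‖X s‖ * ‖V s‖) :=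
          mul_le_mul_of_nonneg_left h2 (by positivity)
        have h8 : 0 ≤ lam * (‖V s‖ - lam / 2 * ‖X s‖) ^ 2 := by positivity
        have h5 : lam * (‖V s‖ ^ 2 - lam ^ 2 / 4 * ‖X s‖ ^ 2) +
          (2 * (lam * (inner ℝ (V s) (U s) - ‖V s‖ ^ 2)) -
            lam ^ 2 / 4 * (2 * inner ℝ (X s) (V s))) ≤ 0 := by
          nlinarith [h6, h7, h8]
        have := mul_nonpos_of_nonneg_of_nonpos (exp_pos (lam * s)).le h5
        simp only [Pi.sub_apply]
        linarith)
    intro s hs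
    have h := hA hs htm hs.2
    simp only [hXt, norm_zero] at h
    have h1 : 0 ≤ exp (lam * s) * (‖V s‖ ^ 2 - lam ^ 2 / 4 * ‖X s‖ ^ 2) :=
      le_trans (mul_nonneg (exp_pos _).le (by simp)) h
    have h2 := nonneg_of_mul_nonneg_right h1 (exp_pos _)
    apply my_le_of_sq _ (by positivity)
    nlinarith
  -- a global continuous extension of α
  have hβ : Continuous (IccExtend hT.le ((Icc (0:ℝ) T).domRestrict α)) :=
    (continuousOn_iff_continuous_domRestrict.1 hα).Icc_extend'
  obtain ⟨β, hβd⟩ : ∃ β, β = IccExtend hT.le ((Icc (0:ℝ) T).domRestrict α) := ⟨_, rfl⟩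
  rw [← hβd] at hβ
  have hβα : ∀ s ∈ Icc (0:ℝ) t, β s = α s := by
    intro s hs
    rw [hβd, IccExtend_of_mem _ _ (hmem s hs)]
    rfl
  have hint : ∫ s in (0:ℝ)..t, α s = ∫ s in (0:ℝ)..t, β s := by
    apply intervalIntegral.integral_congr
    intro s hs
    rw [uIcc_of_le ht0] at hs
    exact (hβα s hs).symm
  rw [hint]
  obtain ⟨B, hB⟩ : ∃ B : ℝ → ℝ, B = fun s => ∫ r in (0:ℝ)..s, β r := ⟨_, rfl⟩
  have hB0 : B 0 = 0 := by rw [hB]; simp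
  have hBt : ∫ s in (0:ℝ)..t, β s = B t := by rw [hB]
  have hBder : ∀ s, HasDerivAt B (β s) s := by
    intro s
    rw [hB]
    exact intervalIntegral.integral_hasDerivAt_right (hβ.intervalIntegrable _ _)
      (hβ.stronglyMeasurableAtFilter _ _) hβ.continuousAt
  rw [hBt]
  have hlVU : ∀ s ∈ Icc (0:ℝ) t, |lam * inner ℝ (V s) (U s)| ≤ 2 * β s * ‖V s‖ ^ 2 := by
    intro s hs
    rw [abs_mul, abs_of_pos hlam0, hβα s hs]
    have h1 := mul_le_mul_of_nonneg_left (hVU s hs) hlam0.le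
    have h2 := mul_le_mul_of_nonneg_left (key s hs)
      (mul_nonneg (norm_nonneg (V s)) (hαpos s (hmem s hs)))
    nlinarith
  have hG : ∀ c s, HasDerivAt (fun s => exp (2 * lam * s) * exp (c * B s))
      (exp (2 * lam * s) * (2 * lam) * exp (c * B s)
        + exp (2 * lam * s) * (exp (c * B s) * (c * β s))) s := fun c s =>
    (hE (2 * lam) s).mul ((hBder s).const_mul c).exp
  have hlow := anti_aux t (fun s => (exp (2 * lam * s) * exp (-4 * B s)) * ‖V s‖ ^ 2) _
    (fun s hs => (hG (-4) s).mul (hVsq s hs)) (by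
      intro s hs
      have h1 := (abs_le.1 (hlVU s hs)).2
      have h2 : 0 ≤ exp (2 * lam * s) * exp (-4 * B s) := by positivity
      have := mul_le_mul_of_nonneg_left h1 h2
      linarith) h0m htm ht0
  have hup := anti_aux t (fun s => -((exp (2 * lam * s) * exp (4 * B s)) * ‖V s‖ ^ 2)) _
    (fun s hs => ((hG 4 s).mul (hVsq s hs)).neg) (by
      intro s hs
      have h1 := (abs_le.1 (hlVU s hs)).1
      have h2 : 0 ≤ exp (2 * lam * s) * exp (4 * B s) := by positivity
      have := mul_le_mul_of_nonneg_left h1 h2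
      linarith) h0m htm ht0
  simp only [hB0, mul_zero, exp_zero, one_mul] at hlow hup
  have e1 : exp (2 * lam * t) = exp (lam * t) ^ 2 := by
    rw [← Real.exp_nat_mul]; congr 1; push_cast; ring
  have e2 : exp (4 * B t) = exp (2 * B t) ^ 2 := by
    rw [← Real.exp_nat_mul]; congr 1; push_cast; ring
  have e3 : exp (-4 * B t) = (exp (2 * B t))⁻¹ ^ 2 := by
    rw [← Real.exp_neg, ← Real.exp_nat_mul]; congr 1; push_cast; ring
  rw [e1, e3] at hlow
  rw [e1, e2] at hup
  constructor
  · apply my_le_of_sq _ (norm_nonneg _)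
    linarith
  · apply my_le_of_sq _ (by positivity)
    linarith
end

section
/- Let h : ℝ³ × ℝ³ → [0,∞) be measurable and essentially bounded, and let 0 ≤ l ≤ k be real numbers with M_k[h] < ∞. Then there is a constant C, depending only on k and l, such that ‖m_l[h]‖_{L^{(3+k)/(3+l)}(ℝ³)} ≤ C · ‖h‖_{L^∞(ℝ³×ℝ³)}^{(k−l)/(3+k)} · M_k[h]^{(3+l)/(3+k)}. -/
open Real Set MeasureTheory ENNReal

local notation "E3" => EuclideanSpace ℝ (Fin 3)

lemma aux_R (V k l A F m : ℝ) (hl : 0 ≤ l) (hlk : l ≤ k) (hA : 0 < A) (hF : 0 < F)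
    (H : ∀ R : ℝ, 0 < R → m ≤ V * R ^ (3:ℕ) * (R ^ l * A) + R ^ (l - k) * F) :
    m ≤ (V + 1) * A ^ ((k - l) / (3 + k)) * F ^ ((3 + l) / (3 + k)) := by
  have h3 : (3 + k) ≠ 0 := by linarith
  have h := H ((F / A) ^ (1 / (3 + k))) (by positivity)
  refine h.trans (le_of_eq ?_)
  have hx : A = exp (log A) := (exp_log hA).symm
  have hy : F = exp (log F) := (exp_log hF).symm
  have e1 : ((F / A) ^ (1 / (3 + k))) = exp ((log F - log A) / (3 + k)) := by
    rw [rpow_def_of_pos (by positivity), log_div hF.ne' hA.ne']; congr 1; ring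
  have e2 : ∀ s : ℝ, (exp ((log F - log A) / (3 + k))) ^ s
      = exp ((log F - log A) / (3 + k) * s) := fun s => by rw [← exp_mul]
  rw [e1, ← Real.rpow_natCast, e2, e2, e2, rpow_def_of_pos hA, rpow_def_of_pos hF]
  have i1 : exp ((log F - log A) / (3 + k) * ((3:ℕ):ℝ)) * (exp ((log F - log A) / (3 + k) * l) * A)
      = exp (log A * ((k - l) / (3 + k))) * exp (log F * ((3 + l) / (3 + k))) := by
    nth_rewrite 3 [hx]
    rw [← exp_add, ← exp_add, ← exp_add]; congr 1; push_cast; field_simp; ring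
  have i2 : exp ((log F - log A) / (3 + k) * (l - k)) * F
      = exp (log A * ((k - l) / (3 + k))) * exp (log F * ((3 + l) / (3 + k))) := by
    nth_rewrite 2 [hy]
    rw [← exp_add, ← exp_add]; congr 1; field_simp; ring
  rw [mul_assoc V, i1, i2]; ring

lemma aux_slice (k l : ℝ) (hl : 0 ≤ l) (hlk : l ≤ k) (g : E3 → ℝ) (h0 : ∀ v, 0 ≤ g v)
    (A : ℝ) (hA : 0 ≤ A) (hg : ∀ᵐ v, g v ≤ A) (hi : Integrable (fun v => ‖v‖ ^ k * g v)) :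
    ∫ v, ‖v‖ ^ l * g v ≤ (volume.real (Metric.ball (0 : E3) 1) + 1) * A ^ ((k - l) / (3 + k)) *
      (∫ v, ‖v‖ ^ k * g v) ^ ((3 + l) / (3 + k)) := by
  set V := volume.real (Metric.ball (0 : E3) 1) with hV
  have hV0 : 0 ≤ V := measureReal_nonneg
  have hF0 : 0 ≤ ∫ v, ‖v‖ ^ k * g v := integral_nonneg fun v => by have := h0 v; positivity
  have hz : g =ᵐ[volume] 0 → ∫ v, ‖v‖ ^ l * g v ≤ (V + 1) * A ^ ((k - l) / (3 + k)) *
      (∫ v, ‖v‖ ^ k * g v) ^ ((3 + l) / (3 + k)) := fun h => by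
    have : ∫ v, ‖v‖ ^ l * g v = 0 := by
      apply integral_eq_zero_of_ae
      filter_upwards [h] with v hv
      simp [hv]
    rw [this]; positivity
  rcases hA.eq_or_lt with hA | hA
  · apply hz
    filter_upwards [hg] with v hv
    exact le_antisymm (by simpa [hA] using hv) (h0 v)
  rcases hF0.eq_or_lt with hF | hF
  · apply hz
    have := (integral_eq_zero_iff_of_nonneg (fun v => by have := h0 v; positivity) hi).1 hF.symm
    have hne : ∀ᵐ v : E3, v ≠ 0 := by
      rw [ae_iff]; simp
    filter_upwards [this, hne] with v hv hn
    have : 0 < ‖v‖ ^ k := rpow_pos_of_pos (norm_pos_iff.2 hn) _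
    simpa [this.ne'] using hv
  apply aux_R V k l A _ _ hl hlk hA hF
  intro R hR
  have hball : volume.real (Metric.ball (0:E3) R) = V * R ^ 3 := by
    have := Measure.addHaar_ball (volume : Measure E3) (0:E3) hR.le
    rw [measureReal_def, this, ENNReal.toReal_mul, ENNReal.toReal_ofReal (by positivity), hV,
      measureReal_def, mul_comm]
    simp
  have hI1 : Integrable ((Metric.ball (0:E3) R).indicator fun _ => R ^ l * A) volume :=
    (integrable_indicator_iff measurableSet_ball).2
      (integrableOn_const (measure_ball_lt_top.ne))
  have hI2 := hi.const_mul (R ^ (l - k))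
  have key : ∫ v, ‖v‖ ^ l * g v ≤ ∫ v, ((Metric.ball (0:E3) R).indicator (fun _ => R ^ l * A) v
      + R ^ (l - k) * (‖v‖ ^ k * g v)) := by
    apply integral_mono_of_nonneg
    · exact Filter.Eventually.of_forall fun v => by have := h0 v; simp only [Pi.zero_apply]; positivity
    · exact hI1.add hI2
    · filter_upwards [hg] with v hv
      have hv0 := h0 v
      by_cases hb : v ∈ Metric.ball (0:E3) R
      · rw [indicator_of_mem hb]
        have hn : ‖v‖ ≤ R := by simpa using (mem_ball_zero_iff.1 hb).le
        have : ‖v‖ ^ l * g v ≤ R ^ l * A := by gcongr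
        have : 0 ≤ R ^ (l - k) * (‖v‖ ^ k * g v) := by positivity
        linarith
      · rw [indicator_of_notMem hb, zero_add]
        have hn : R ≤ ‖v‖ := by simpa using hb
        have hp : 0 < ‖v‖ := hR.trans_le hn
        have e : ‖v‖ ^ l = ‖v‖ ^ (l - k) * ‖v‖ ^ k := by rw [← rpow_add hp]; congr 1; ring
        rw [e, mul_assoc]
        have : ‖v‖ ^ (l - k) ≤ R ^ (l - k) := rpow_le_rpow_of_nonpos hR hn (by linarith)
        gcongr
  rw [integral_add hI1 hI2, integral_const_mul, integral_indicator measurableSet_ball,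
    setIntegral_const, hball, smul_eq_mul] at key
  exact key

/-- Interpolation estimate for velocity moments: for `0 ≤ l ≤ k`, the `L^{(3+k)/(3+l)}`-norm
of the `l`-th velocity moment `m_l[h](x) = ∫ |v|^l h(x,v) dv` is controlled by
`‖h‖_∞^{(k−l)/(3+k)} · M_k[h]^{(3+l)/(3+k)}`, where `M_k[h] = ∬ |v|^k h dv dx`. -/
theorem moment_interpolation_Lp
    (k l : ℝ) (hl : 0 ≤ l) (hlk : l ≤ k) :
    ∃ C : ℝ, 0 < C ∧
      ∀ h : E3 × E3 → ℝ, Measurable h → (∀ p, 0 ≤ h p) →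
        eLpNorm h ⊤ volume < ⊤ →
        Integrable (fun p : E3 × E3 => ‖p.2‖ ^ k * h p) volume →
        eLpNorm (fun x : E3 => ∫ v : E3, ‖v‖ ^ l * h (x, v))
            (ENNReal.ofReal ((3 + k) / (3 + l))) volume
          ≤ ENNReal.ofReal
              (C * (eLpNorm h ⊤ volume).toReal ^ ((k - l) / (3 + k)) *
                (∫ p : E3 × E3, ‖p.2‖ ^ k * h p) ^ ((3 + l) / (3 + k))) := by
  have hV0 : 0 ≤ volume.real (Metric.ball (0 : E3) 1) := measureReal_nonneg
  refine ⟨volume.real (Metric.ball (0 : E3) 1) + 1, by positivity, ?_⟩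
  intro h hm h0 hb hi
  set A := (eLpNorm h ⊤ volume).toReal with hA
  have hA0 : 0 ≤ A := ENNReal.toReal_nonneg
  have hae : ∀ᵐ p : E3 × E3, h p ≤ A := by
    have h1 := ae_le_eLpNormEssSup (f := h) (μ := volume)
    filter_upwards [h1] with p hp
    rw [eLpNorm_exponent_top] at hA hb
    have := ENNReal.toReal_mono hb.ne hp
    rw [toReal_enorm, Real.norm_of_nonneg (h0 p)] at this
    exact this
  rw [Measure.volume_eq_prod] at hae hi
  have hae' := Measure.ae_ae_of_ae_prod hae
  have his := hi.prod_right_ae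
  set c := (volume.real (Metric.ball (0 : E3) 1) + 1) * A ^ ((k - l) / (3 + k)) with hc
  have hc0 : 0 ≤ c := by positivity
  set F : E3 → ℝ := fun x => ∫ v, ‖v‖ ^ k * h (x, v) with hF
  have hF0 : ∀ x, 0 ≤ F x := fun x => integral_nonneg fun v => by have := h0 (x, v); positivity
  have hFi : Integrable F := hi.integral_prod_left
  have hFint : ∫ p : E3 × E3, ‖p.2‖ ^ k * h p = ∫ x, F x := by
    rw [Measure.volume_eq_prod, integral_prod _ hi]
  have hp : 0 < (3 + k) / (3 + l) := div_pos (by linarith) (by linarith)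
  have hpq : (3 + l) / (3 + k) * ((3 + k) / (3 + l)) = 1 := by
    have : 3 + k ≠ 0 := by linarith
    have : 3 + l ≠ 0 := by linarith
    field_simp
  have hq : 1 / ((3 + k) / (3 + l)) = (3 + l) / (3 + k) := one_div_div _ _
  have step : eLpNorm (fun x : E3 => ∫ v : E3, ‖v‖ ^ l * h (x, v))
      (ENNReal.ofReal ((3 + k) / (3 + l))) volume ≤
      eLpNorm (fun x => c * F x ^ ((3 + l) / (3 + k)))
      (ENNReal.ofReal ((3 + k) / (3 + l))) volume := by
    apply eLpNorm_mono_ae_real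
    filter_upwards [hae', his] with x hx1 hx2
    rw [Real.norm_of_nonneg (integral_nonneg fun v => by have := h0 (x, v); positivity)]
    exact aux_slice k l hl hlk (fun v => h (x, v)) (fun v => h0 _) A hA0 hx1 hx2
  refine step.trans (le_of_eq ?_)
  rw [eLpNorm_eq_lintegral_rpow_enorm_toReal (by simpa using hp) (by simp),
    ENNReal.toReal_ofReal hp.le, hFint]
  have e : ∀ x, ‖c * F x ^ ((3 + l) / (3 + k))‖ₑ ^ ((3 + k) / (3 + l))
      = ENNReal.ofReal (c ^ ((3 + k) / (3 + l)) * F x) := fun x => by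
    have hx := hF0 x
    rw [Real.enorm_of_nonneg (by positivity), ENNReal.ofReal_rpow_of_nonneg (by positivity) hp.le,
      mul_rpow hc0 (by positivity), ← rpow_mul hx, hpq, Real.rpow_one]
  simp_rw [e]
  have hI0 : 0 ≤ ∫ x, F x := integral_nonneg hF0
  rw [← ofReal_integral_eq_lintegral_ofReal (hFi.const_mul _)
    (Filter.Eventually.of_forall fun x => by have := hF0 x; simp only [Pi.zero_apply]; positivity),
    integral_const_mul, hq, ENNReal.ofReal_rpow_of_nonneg (by positivity)
      (div_nonneg (by linarith) (by linarith)),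
    mul_rpow (by positivity) hI0, ← rpow_mul hc0, mul_comm ((3 + k) / (3 + l)), hpq, Real.rpow_one]
end

section
/- Let d > 0, X ∈ ℝ³ and F ∈ ℝ³, and define w : ℝ³ → ℝ³ by w(x) := (1/|B_d(X)|) · ∫_{B_d(X)} Φ(x − y)·F dy, where Φ is the Oseen tensor and B_d(X) is the closed ball of radius d centered at X. Then there is a universal constant C such that: (i) |w(x)| ≤ C·|F| / (|x − X| + d) for all x ∈ ℝ³; (ii) w is differentiable on ℝ³ and ‖Dw(x)‖ ≤ C·|F| / (|x − X|² + d²) for all x ∈ ℝ³. -/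
open Real Set MeasureTheory

local notation "E3" => EuclideanSpace ℝ (Fin 3)

/-- The Oseen tensor `Φ(x) = (1/(8π)) (|x|⁻¹ Id + |x|⁻³ x ⊗ x)`, viewed as a continuous
linear map `ℝ³ → ℝ³` for each `x ≠ 0`. -/
noncomputable def oseen (x : EuclideanSpace ℝ (Fin 3)) :
    EuclideanSpace ℝ (Fin 3) →L[ℝ] EuclideanSpace ℝ (Fin 3) :=
  (8 * Real.pi)⁻¹ • (‖x‖⁻¹ • ContinuousLinearMap.id ℝ (EuclideanSpace ℝ (Fin 3)) +
    (‖x‖ ^ 3)⁻¹ • ((innerSL ℝ x).smulRight x))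

/-- The smeared Stokeslet: the decaying Stokes solution with right-hand side
`F·δ_{B_d(X)}`, i.e. the average of `Φ(x−y)·F` over the closed ball `B_d(X)`. -/
noncomputable def smearedStokeslet (d : ℝ) (X F x : EuclideanSpace ℝ (Fin 3)) :
    EuclideanSpace ℝ (Fin 3) :=
  (volume (Metric.closedBall X d)).toReal⁻¹ •
    ∫ y in Metric.closedBall X d, oseen (x - y) F


open Filter Topology

lemma kern_locInt : LocallyIntegrable (fun z : E3 => (‖z‖ ^ 2)⁻¹) volume := by
  refine locallyIntegrable_of_norm_le_rpow (C := 1) (α := 2) ?_ ?_ ?_ ?_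
  · simp
  · simp; norm_num
  · refine ae_of_all _ fun z => ?_
    rw [Real.rpow_neg (norm_nonneg _)]
    simp
  · exact (by fun_prop : Measurable (fun z : E3 => (‖z‖ ^ 2)⁻¹)).aestronglyMeasurable

lemma kern_int (c : E3) (r : ℝ) : IntegrableOn (fun z : E3 => (‖z‖ ^ 2)⁻¹) (Metric.closedBall c r) :=
  kern_locInt.integrableOn_isCompact (isCompact_closedBall c r)

/-- the constant -/
noncomputable def kap : ℝ := ∫ z in Metric.closedBall (0 : E3) 1, (‖z‖ ^ 2)⁻¹

lemma kap_nonneg : 0 ≤ kap := by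
  unfold kap; positivity

lemma kern_ball (r : ℝ) (hr : 0 < r) :
    ∫ z in Metric.closedBall (0 : E3) r, (‖z‖ ^ 2)⁻¹ = kap * r := by
  have h := Measure.setIntegral_comp_smul_of_pos (volume : Measure E3)
    (fun z : E3 => (‖z‖ ^ 2)⁻¹) (Metric.closedBall (0 : E3) 1) hr
  rw [smul_unitClosedBall_of_nonneg hr.le] at h
  simp only [norm_smul, mul_pow, mul_inv, integral_const_mul, finrank_euclideanSpace,
    Fintype.card_fin, smul_eq_mul, Real.norm_eq_abs, sq_abs] at h
  change (r ^ 2)⁻¹ * kap = _ at h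
  have h2 := congrArg (fun t => r ^ 3 * t) h
  rw [mul_inv_cancel_left₀ (by positivity)] at h2
  rw [← h2]
  field_simp

lemma inv_norm_lip (a b : E3) (ha : a ≠ 0) (hb : b ≠ 0) :
    |‖a‖⁻¹ - ‖b‖⁻¹| ≤ ‖a - b‖ / (‖a‖ * ‖b‖) := by
  have h1 := norm_pos_iff.2 ha
  have h2 := norm_pos_iff.2 hb
  rw [inv_sub_inv h1.ne' h2.ne', abs_div, abs_of_pos (mul_pos h1 h2), norm_sub_rev]
  gcongr
  exact abs_norm_sub_norm_le _ _

lemma unit_lip (a b : E3) (ha : a ≠ 0) (hb : b ≠ 0) :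
    ‖‖a‖⁻¹ • a - ‖b‖⁻¹ • b‖ ≤ 2 * ‖a - b‖ / ‖a‖ := by
  have h1 := norm_pos_iff.2 ha
  have h2 := norm_pos_iff.2 hb
  have e : ‖a‖⁻¹ • a - ‖b‖⁻¹ • b = ‖a‖⁻¹ • (a - b) + (‖a‖⁻¹ - ‖b‖⁻¹) • b := by
    module
  rw [e]
  refine (norm_add_le _ _).trans ?_
  rw [norm_smul, norm_smul, Real.norm_eq_abs, Real.norm_eq_abs, abs_of_pos (inv_pos.2 h1)]
  have := mul_le_mul_of_nonneg_right (inv_norm_lip a b ha hb) h2.le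
  have e2 : ‖a - b‖ / (‖a‖ * ‖b‖) * ‖b‖ = ‖a‖⁻¹ * ‖a - b‖ := by field_simp
  have e3 : 2 * ‖a - b‖ / ‖a‖ = 2 * (‖a‖⁻¹ * ‖a - b‖) := by field_simp
  linarith

lemma oseen_apply (F z : E3) : oseen z F =
    (8 * Real.pi)⁻¹ • (‖z‖⁻¹ • F + (‖z‖ ^ 3)⁻¹ • (inner ℝ z F • z)) := by
  simp [oseen]

lemma oseen_lip (F a b : E3) (ha : a ≠ 0) (hb : b ≠ 0) :
    ‖oseen a F - oseen b F‖ ≤ ‖F‖ * (‖a - b‖ / (‖a‖ * ‖b‖)) := by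
  have h1 := norm_pos_iff.2 ha
  have h2 := norm_pos_iff.2 hb
  set u := ‖a‖⁻¹ • a with hu
  set v := ‖b‖⁻¹ • b with hv
  have hun : ‖u‖ = 1 := by rw [hu, norm_smul]; simp [h1.ne']
  have hvn : ‖v‖ = 1 := by rw [hv, norm_smul]; simp [h2.ne']
  have ea : (‖a‖ ^ 3)⁻¹ • (inner ℝ a F • a) = ‖a‖⁻¹ • (inner ℝ u F • u) := by
    rw [hu, real_inner_smul_left, smul_smul, smul_smul, smul_smul]
    congr 1; field_simp
  have eb : (‖b‖ ^ 3)⁻¹ • (inner ℝ b F • b) = ‖b‖⁻¹ • (inner ℝ v F • v) := by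
    rw [hv, real_inner_smul_left, smul_smul, smul_smul, smul_smul]
    congr 1; field_simp
  have e : oseen a F - oseen b F = (8 * Real.pi)⁻¹ • ((‖a‖⁻¹ - ‖b‖⁻¹) • F +
      (‖a‖⁻¹ - ‖b‖⁻¹) • (inner ℝ u F • u) + ‖b‖⁻¹ • (inner ℝ (u - v) F • u) +
      ‖b‖⁻¹ • (inner ℝ v F • (u - v))) := by
    rw [oseen_apply, oseen_apply, ea, eb, inner_sub_left]
    module
  have hl := inv_norm_lip a b ha hb
  have huv := unit_lip a b ha hb
  set D := ‖a - b‖ / (‖a‖ * ‖b‖) with hD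
  have hD0 : 0 ≤ D := by positivity
  have hF : 0 ≤ ‖F‖ := norm_nonneg _
  have i1 : |inner ℝ u F| ≤ ‖F‖ := by simpa [hun] using abs_real_inner_le_norm u F
  have i2 : |inner ℝ v F| ≤ ‖F‖ := by simpa [hvn] using abs_real_inner_le_norm v F
  have i3 : |inner ℝ (u - v) F| ≤ ‖u - v‖ * ‖F‖ := abs_real_inner_le_norm _ F
  have huv2 : ‖b‖⁻¹ * ‖u - v‖ ≤ 2 * D := by
    calc ‖b‖⁻¹ * ‖u - v‖ ≤ ‖b‖⁻¹ * (2 * ‖a - b‖ / ‖a‖) := by gcongr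
      _ = 2 * D := by rw [hD]; field_simp
  have n1 : ‖(‖a‖⁻¹ - ‖b‖⁻¹) • F‖ ≤ D * ‖F‖ := by
    rw [norm_smul, Real.norm_eq_abs]; gcongr
  have n2 : ‖(‖a‖⁻¹ - ‖b‖⁻¹) • (inner ℝ u F • u)‖ ≤ D * ‖F‖ := by
    rw [norm_smul, norm_smul, hun, mul_one, Real.norm_eq_abs, Real.norm_eq_abs]; gcongr
  have n3 : ‖‖b‖⁻¹ • (inner ℝ (u - v) F • u)‖ ≤ 2 * D * ‖F‖ := by
    rw [norm_smul, norm_smul, hun, mul_one, Real.norm_eq_abs, Real.norm_eq_abs,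
      abs_of_pos (inv_pos.2 h2)]
    calc _ ≤ ‖b‖⁻¹ * (‖u - v‖ * ‖F‖) := by gcongr
      _ = (‖b‖⁻¹ * ‖u - v‖) * ‖F‖ := by ring
      _ ≤ _ := by gcongr
  have n4 : ‖‖b‖⁻¹ • (inner ℝ v F • (u - v))‖ ≤ 2 * D * ‖F‖ := by
    rw [norm_smul, norm_smul, Real.norm_eq_abs, Real.norm_eq_abs,
      abs_of_pos (inv_pos.2 h2)]
    calc _ ≤ ‖b‖⁻¹ * (‖F‖ * ‖u - v‖) := by gcongr
      _ = (‖b‖⁻¹ * ‖u - v‖) * ‖F‖ := by ring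
      _ ≤ _ := by gcongr
  rw [e, norm_smul, Real.norm_eq_abs, abs_of_pos (by positivity)]
  have hpi : (8 * Real.pi)⁻¹ ≤ 1 / 6 := by
    rw [inv_le_comm₀ (by positivity) (by norm_num)]
    have := Real.pi_gt_three
    linarith
  calc _ ≤ 1 / 6 * (D * ‖F‖ + D * ‖F‖ + 2 * D * ‖F‖ + 2 * D * ‖F‖) := by
        gcongr
        exact (norm_add₄_le).trans (by gcongr)
    _ = ‖F‖ * D := by ring

lemma oseen_bound (F z : E3) : ‖oseen z F‖ ≤ ‖F‖ * ‖z‖⁻¹ := by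
  rcases eq_or_ne z 0 with rfl | hz
  · simp [oseen_apply]
  have h1 := norm_pos_iff.2 hz
  rw [oseen_apply, norm_smul, Real.norm_eq_abs, abs_of_pos (by positivity)]
  have hpi : (8 * Real.pi)⁻¹ ≤ 1 / 2 := by
    rw [inv_le_comm₀ (by positivity) (by norm_num)]
    have := Real.pi_gt_three
    linarith
  have n1 : ‖‖z‖⁻¹ • F‖ ≤ ‖F‖ * ‖z‖⁻¹ := by rw [norm_smul]; simp [mul_comm]
  have n2 : ‖(‖z‖ ^ 3)⁻¹ • (inner ℝ z F • z)‖ ≤ ‖F‖ * ‖z‖⁻¹ := by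
    rw [norm_smul, norm_smul, Real.norm_eq_abs, Real.norm_eq_abs, abs_of_pos (by positivity)]
    calc _ ≤ (‖z‖ ^ 3)⁻¹ * ((‖z‖ * ‖F‖) * ‖z‖) := by
          gcongr; exact abs_real_inner_le_norm _ _
      _ = _ := by field_simp
  calc _ ≤ 1 / 2 * (‖F‖ * ‖z‖⁻¹ + ‖F‖ * ‖z‖⁻¹) := by
        gcongr
        exact (norm_add_le _ _).trans (by gcongr)
    _ = _ := by ring

lemma oseen_diff (F z : E3) (hz : z ≠ 0) : DifferentiableAt ℝ (fun z => oseen z F) z := by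
  simp only [oseen_apply]
  have hn : DifferentiableAt ℝ (fun z : E3 => ‖z‖) z := (contDiffAt_norm ℝ hz (n := 1)).differentiableAt (by norm_num)
  have h1 := norm_ne_zero_iff.2 hz
  have h2 : DifferentiableAt ℝ (fun z : E3 => ‖z‖⁻¹) z := hn.inv h1
  have h3 : DifferentiableAt ℝ (fun z : E3 => (‖z‖ ^ 3)⁻¹) z := (hn.pow 3).inv (pow_ne_zero 3 h1)
  have h4 : DifferentiableAt ℝ (fun z : E3 => (inner ℝ z F : ℝ)) z :=
    differentiableAt_id.inner ℝ (differentiableAt_const F)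
  exact DifferentiableAt.const_smul (DifferentiableAt.add (h2.smul_const F) (h3.smul (h4.smul differentiableAt_id))) (8 * Real.pi)⁻¹

lemma oseen_fderiv (F z : E3) (hz : z ≠ 0) :
    ‖fderiv ℝ (fun z => oseen z F) z‖ ≤ 2 * ‖F‖ * (‖z‖ ^ 2)⁻¹ := by
  have h1 := norm_pos_iff.2 hz
  refine norm_fderiv_le_of_lip' ℝ (by positivity) ?_
  have : ∀ᶠ x : E3 in 𝓝 z, ‖z‖ / 2 < ‖x‖ :=
    (continuous_norm.tendsto z).eventually (lt_mem_nhds (by linarith))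
  filter_upwards [this] with x hx
  have hx0 : x ≠ 0 := norm_pos_iff.1 (by linarith)
  refine (oseen_lip F x z hx0 hz).trans ?_
  calc _ ≤ ‖F‖ * (‖x - z‖ / (‖z‖ / 2 * ‖z‖)) := by gcongr
    _ = _ := by field_simp

lemma oseen_meas (F : E3) : Measurable (fun z => oseen z F) := by
  simp only [oseen_apply]
  fun_prop

lemma kern_ball' (r : ℝ) (hr : 0 ≤ r) :
    ∫ z in Metric.closedBall (0 : E3) r, (‖z‖ ^ 2)⁻¹ = kap * r := by
  rcases hr.eq_or_lt with rfl | h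
  · simp
  · exact kern_ball r h

/-- truncated kernel -/
noncomputable def Kt (r : ℝ) : E3 → ℝ :=
  (Metric.closedBall (0 : E3) r).indicator (fun z => (‖z‖ ^ 2)⁻¹)

lemma Kt_int (r : ℝ) : Integrable (Kt r) :=
  (kern_int 0 r).integrable_indicator measurableSet_closedBall

lemma Kt_nonneg (r : ℝ) (z : E3) : 0 ≤ Kt r z :=
  Set.indicator_nonneg (fun z _ => by positivity) z

lemma Kt_eq (r : ℝ) (z : E3) (h : ‖z‖ ≤ r) : Kt r z = (‖z‖ ^ 2)⁻¹ :=
  Set.indicator_of_mem (by simpa using h) _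

lemma Kt_integral (r : ℝ) (hr : 0 ≤ r) : ∫ z, Kt r z = kap * r := by
  rw [← kern_ball' r hr, ← integral_indicator measurableSet_closedBall]; rfl

lemma Kt_shift (r : ℝ) (hr : 0 ≤ r) (h : E3) (s : Set E3) :
    ∫ z in s, Kt r (z + h) ≤ kap * r := by
  rw [← Kt_integral r hr, ← integral_add_right_eq_self (Kt r) h]
  exact setIntegral_le_integral ((Kt_int r).comp_add_right h) (ae_of_all _ fun z => Kt_nonneg r _)

lemma kern_int_shift (c h : E3) (r : ℝ) :
    IntegrableOn (fun z : E3 => (‖z + h‖ ^ 2)⁻¹) (Metric.closedBall c r) := by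
  refine (((Kt_int (‖c + h‖ + r)).comp_add_right h).integrableOn).congr_fun ?_
    measurableSet_closedBall
  intro z hz
  refine Kt_eq _ _ ?_
  rw [Metric.mem_closedBall, dist_eq_norm] at hz
  calc ‖z + h‖ = ‖(c + h) + (z - c)‖ := by congr 1; abel
    _ ≤ _ := (norm_add_le _ _).trans (by gcongr)

lemma oseen_int (F c h : E3) (r : ℝ) :
    IntegrableOn (fun z : E3 => oseen (z + h) F) (Metric.closedBall c r) := by
  have h0 : IntegrableOn (fun z : E3 => ‖F‖ * (1 + (‖z + h‖ ^ 2)⁻¹)) (Metric.closedBall c r) := by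
    refine Integrable.const_mul ?_ _
    refine Integrable.add ?_ (kern_int_shift c h r)
    exact integrableOn_const measure_closedBall_lt_top.ne
  refine h0.mono' ((oseen_meas F).comp (measurable_id.add_const h)).aestronglyMeasurable ?_
  refine ae_of_all _ fun z => (oseen_bound F _).trans ?_
  gcongr
  rw [← inv_pow]
  nlinarith [sq_nonneg (‖z + h‖⁻¹ - 1)]

lemma ae_ne_zero (h : E3) : ∀ᵐ z : E3, z + h ≠ 0 := by
  have : ∀ᵐ z : E3, z ≠ -h := by
    simp [ae_iff, measure_singleton]
  filter_upwards [this] with z hz h0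
  exact hz (eq_neg_of_add_eq_zero_left h0)

lemma ae_ne_zero' : ∀ᵐ z : E3, z ≠ 0 := by simpa using ae_ne_zero 0

lemma fd_int (F c : E3) (r : ℝ) :
    IntegrableOn (fun z : E3 => fderiv ℝ (fun z => oseen z F) z) (Metric.closedBall c r) := by
  refine ((kern_int c r).const_mul (2 * ‖F‖)).mono' (measurable_fderiv ℝ _).aestronglyMeasurable ?_
  filter_upwards [ae_restrict_of_ae ae_ne_zero'] with z hz
  exact oseen_fderiv F z hz

/-- difference quotient -/
noncomputable def quo (F h z : E3) : ℝ :=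
  ‖h‖⁻¹ * ‖oseen (z + h) F - oseen z F - fderiv ℝ (fun z => oseen z F) z h‖

lemma quo_meas (F h : E3) : Measurable (quo F h) := by
  unfold quo
  have h1 : Measurable fun z => oseen (z + h) F := (oseen_meas F).comp (measurable_id.add_const h)
  have h2 := oseen_meas F
  have h3 : Measurable fun z => fderiv ℝ (fun z => oseen z F) z h := measurable_fderiv_apply_const ℝ _ h
  exact ((h1.sub h2).sub h3).norm.const_mul _

lemma quo_nonneg (F h z : E3) : 0 ≤ quo F h z := by unfold quo; positivity

lemma quo_le (F h z : E3) (hz : z ≠ 0) (hzh : z + h ≠ 0) :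
    quo F h z ≤ 3 * ‖F‖ * (‖z‖ ^ 2)⁻¹ + ‖F‖ * (‖z + h‖ ^ 2)⁻¹ := by
  rcases eq_or_ne h 0 with rfl | hh
  · simp only [quo, norm_zero, inv_zero, zero_mul]; positivity
  have p1 := norm_pos_iff.2 hz
  have p2 := norm_pos_iff.2 hzh
  have p3 := norm_pos_iff.2 hh
  have b1 := oseen_lip F _ _ hzh hz
  rw [add_sub_cancel_left] at b1
  have b2 := ContinuousLinearMap.le_of_opNorm_le _ (oseen_fderiv F z hz) h
  have b3 : ‖oseen (z + h) F - oseen z F - fderiv ℝ (fun z => oseen z F) z h‖ ≤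
      ‖F‖ * (‖h‖ / (‖z + h‖ * ‖z‖)) + 2 * ‖F‖ * (‖z‖ ^ 2)⁻¹ * ‖h‖ :=
    (norm_sub_le _ _).trans (add_le_add b1 b2)
  have b4 : ‖z + h‖⁻¹ * ‖z‖⁻¹ ≤ (‖z‖ ^ 2)⁻¹ + (‖z + h‖ ^ 2)⁻¹ := by
    rw [← inv_pow, ← inv_pow]
    have q1 := inv_pos.2 p1
    have q2 := inv_pos.2 p2
    nlinarith [sq_nonneg (‖z + h‖⁻¹ - ‖z‖⁻¹)]
  calc quo F h z ≤ ‖h‖⁻¹ * (‖F‖ * (‖h‖ / (‖z + h‖ * ‖z‖)) + 2 * ‖F‖ * (‖z‖ ^ 2)⁻¹ * ‖h‖) := by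
        unfold quo; gcongr
    _ = ‖F‖ * (‖z + h‖⁻¹ * ‖z‖⁻¹) + 2 * ‖F‖ * (‖z‖ ^ 2)⁻¹ := by field_simp
    _ ≤ ‖F‖ * ((‖z‖ ^ 2)⁻¹ + (‖z + h‖ ^ 2)⁻¹) + 2 * ‖F‖ * (‖z‖ ^ 2)⁻¹ := by gcongr
    _ = _ := by ring

/-- far part -/
noncomputable def far (F h : E3) : E3 → ℝ := {z : E3 | 2 * ‖h‖ ≤ ‖z‖}.indicator (quo F h)

lemma far_meas (F h : E3) : Measurable (far F h) :=
  (quo_meas F h).indicator (measurableSet_le measurable_const measurable_norm)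

lemma far_nonneg (F h z : E3) : 0 ≤ far F h z :=
  Set.indicator_nonneg (fun z _ => quo_nonneg F h z) z

lemma far_le (F h z : E3) (hz : z ≠ 0) : far F h z ≤ 7 * ‖F‖ * (‖z‖ ^ 2)⁻¹ := by
  by_cases hm : 2 * ‖h‖ ≤ ‖z‖
  · have p1 := norm_pos_iff.2 hz
    have t : ‖z‖ / 2 ≤ ‖z + h‖ := by
      have := norm_sub_le (z + h) h
      rw [add_sub_cancel_right] at this
      linarith
    have hzh : z + h ≠ 0 := norm_pos_iff.1 (by linarith)
    have e : far F h z = quo F h z := Set.indicator_of_mem (s := {z : E3 | 2 * ‖h‖ ≤ ‖z‖}) hm _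
    rw [e]
    calc _ ≤ _ := quo_le F h z hz hzh
      _ ≤ 3 * ‖F‖ * (‖z‖ ^ 2)⁻¹ + ‖F‖ * ((‖z‖ / 2) ^ 2)⁻¹ := by gcongr
      _ = _ := by field_simp; ring
  · have e : far F h z = 0 := Set.indicator_of_notMem (s := {z : E3 | 2 * ‖h‖ ≤ ‖z‖}) hm _
    rw [e]; positivity

lemma quo_split (F h z : E3) (hz : z ≠ 0) (hzh : z + h ≠ 0) :
    quo F h z ≤ far F h z + (3 * ‖F‖ * Kt (3 * ‖h‖) z + ‖F‖ * Kt (3 * ‖h‖) (z + h)) := by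
  by_cases hm : 2 * ‖h‖ ≤ ‖z‖
  · have e : far F h z = quo F h z := Set.indicator_of_mem (s := {z : E3 | 2 * ‖h‖ ≤ ‖z‖}) hm _
    have k1 := Kt_nonneg (3 * ‖h‖) z
    have k2 := Kt_nonneg (3 * ‖h‖) (z + h)
    rw [e]
    have : 0 ≤ (3 * ‖F‖ * Kt (3 * ‖h‖) z + ‖F‖ * Kt (3 * ‖h‖) (z + h)) := by positivity
    linarith
  · push Not at hm
    have := norm_nonneg h
    rw [Kt_eq _ z (by linarith), Kt_eq _ (z + h) ((norm_add_le _ _).trans (by linarith))]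
    have := far_nonneg F h z
    have := quo_le F h z hz hzh
    linarith

lemma far_int (F h c : E3) (r : ℝ) : IntegrableOn (far F h) (Metric.closedBall c r) := by
  refine ((kern_int c r).const_mul (7 * ‖F‖)).mono' (far_meas F h).aestronglyMeasurable ?_
  filter_upwards [ae_restrict_of_ae ae_ne_zero'] with z hz
  rw [Real.norm_eq_abs, abs_of_nonneg (far_nonneg F h z)]
  exact far_le F h z hz

lemma far_tendsto (F c : E3) (r : ℝ) :
    Tendsto (fun h => ∫ z in Metric.closedBall c r, far F h z) (𝓝 0) (𝓝 0) := by
  have := tendsto_integral_filter_of_dominated_convergence (l := 𝓝 (0 : E3))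
    (μ := volume.restrict (Metric.closedBall c r)) (F := fun h z => far F h z) (f := fun _ => (0 : ℝ))
    (fun z => 7 * ‖F‖ * (‖z‖ ^ 2)⁻¹) (Eventually.of_forall fun h => (far_meas F h).aestronglyMeasurable)
    (Eventually.of_forall fun h => by
      filter_upwards [ae_restrict_of_ae ae_ne_zero'] with z hz
      rw [Real.norm_eq_abs, abs_of_nonneg (far_nonneg F h z)]
      exact far_le F h z hz) ((kern_int c r).const_mul (7 * ‖F‖)) (by
      filter_upwards [ae_restrict_of_ae ae_ne_zero'] with z hz
      have hq : Tendsto (fun h => quo F h z) (𝓝 0) (𝓝 0) := by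
        have h1 := hasFDerivAt_iff_tendsto.1 (oseen_diff F z hz).hasFDerivAt
        have h2 : Tendsto (fun h : E3 => z + h) (𝓝 0) (𝓝 z) := by
          have : Continuous (fun h : E3 => z + h) := by fun_prop
          simpa using this.tendsto 0
        have h3 := h1.comp h2
        simpa [Function.comp_def, quo] using h3
      refine squeeze_zero (fun h => far_nonneg F h z) (fun h => ?_) hq
      exact Set.indicator_le_self' (fun z _ => quo_nonneg F h z) z)
  simpa using this

lemma main_deriv (F c : E3) (r : ℝ) :
    HasFDerivAt (fun h => ∫ z in Metric.closedBall c r, oseen (z + h) F)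
      (∫ z in Metric.closedBall c r, fderiv ℝ (fun z => oseen z F) z) 0 := by
  rw [hasFDerivAt_iff_tendsto]
  have hb : Tendsto (fun h : E3 => (∫ z in Metric.closedBall c r, far F h z) +
      4 * ‖F‖ * (kap * (3 * ‖h‖))) (𝓝 0) (𝓝 0) := by
    have h1 : Tendsto (fun h : E3 => 4 * ‖F‖ * (kap * (3 * ‖h‖))) (𝓝 0) (𝓝 0) := by
      have : Continuous (fun h : E3 => 4 * ‖F‖ * (kap * (3 * ‖h‖))) := by fun_prop
      simpa using this.tendsto 0
    simpa using (far_tendsto F c r).add h1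
  refine squeeze_zero (fun h => by positivity) (fun h => ?_) hb
  simp only [sub_zero, add_zero]
  have i0 : IntegrableOn (fun z : E3 => oseen z F) (Metric.closedBall c r) := by
    simpa using oseen_int F c 0 r
  have i1 := oseen_int F c h r
  have i2 := fd_int F c r
  have i3 : IntegrableOn (fun z => fderiv ℝ (fun z => oseen z F) z h) (Metric.closedBall c r) :=
    i2.apply_continuousLinearMap h
  rw [ContinuousLinearMap.integral_apply i2 h, ← integral_sub i1 i0,
    ← integral_sub (f := fun z => oseen (z + h) F - oseen z F) (i1.sub i0) i3]
  have iK1 : Integrable (fun z => 3 * ‖F‖ * Kt (3 * ‖h‖) z) (volume.restrict (Metric.closedBall c r)) :=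
    ((Kt_int _).integrableOn).const_mul _
  have iK2 : Integrable (fun z => ‖F‖ * Kt (3 * ‖h‖) (z + h)) (volume.restrict (Metric.closedBall c r)) :=
    (((Kt_int _).comp_add_right h).integrableOn).const_mul _
  have ifar := far_int F h c r
  calc _ ≤ ‖h‖⁻¹ * ∫ z in Metric.closedBall c r,
        ‖oseen (z + h) F - oseen z F - fderiv ℝ (fun z => oseen z F) z h‖ := by
        gcongr; exact norm_integral_le_integral_norm _
    _ = ∫ z in Metric.closedBall c r, quo F h z := by rw [← integral_const_mul]; rfl
    _ ≤ ∫ z in Metric.closedBall c r,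
        (far F h z + (3 * ‖F‖ * Kt (3 * ‖h‖) z + ‖F‖ * Kt (3 * ‖h‖) (z + h))) := by
        refine integral_mono_ae ?_ (ifar.add (iK1.add iK2)) ?_
        · exact ((i1.sub i0).sub i3).norm.const_mul _
        · filter_upwards [ae_restrict_of_ae ae_ne_zero', ae_restrict_of_ae (ae_ne_zero h)] with z a b
          exact quo_split F h z a b
    _ = (∫ z in Metric.closedBall c r, far F h z) +
        (3 * ‖F‖ * (∫ z in Metric.closedBall c r, Kt (3 * ‖h‖) z) +
          ‖F‖ * ∫ z in Metric.closedBall c r, Kt (3 * ‖h‖) (z + h)) := by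
        rw [integral_add (g := fun z => 3 * ‖F‖ * Kt (3 * ‖h‖) z + ‖F‖ * Kt (3 * ‖h‖) (z + h))
            ifar (iK1.add iK2), integral_add iK1 iK2, integral_const_mul,
          integral_const_mul]
    _ ≤ (∫ z in Metric.closedBall c r, far F h z) +
        (3 * ‖F‖ * (kap * (3 * ‖h‖)) + ‖F‖ * (kap * (3 * ‖h‖))) := by
        gcongr
        · simpa using Kt_shift (3 * ‖h‖) (by positivity) 0 (Metric.closedBall c r)
        · exact Kt_shift (3 * ‖h‖) (by positivity) h (Metric.closedBall c r)
    _ = _ := by ring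

lemma change_var {G : Type*} [NormedAddCommGroup G] [NormedSpace ℝ G] (g : E3 → G) (x X : E3) (d : ℝ) :
    ∫ y in Metric.closedBall X d, g (x - y) = ∫ z in Metric.closedBall (x - X) d, g z := by
  rw [← integral_indicator measurableSet_closedBall, ← integral_indicator measurableSet_closedBall,
    ← integral_sub_left_eq_self ((Metric.closedBall (x - X) d).indicator fun z => g z) volume x]
  congr 1
  ext y
  have : y ∈ Metric.closedBall X d ↔ x - y ∈ Metric.closedBall (x - X) d := by
    simp [Metric.mem_closedBall, dist_eq_norm, norm_sub_rev]
  by_cases h : y ∈ Metric.closedBall X d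
  · rw [Set.indicator_of_mem h, Set.indicator_of_mem (this.1 h)]
  · rw [Set.indicator_of_notMem h, Set.indicator_of_notMem (fun h' => h (this.2 h'))]

/-- volume of the unit ball -/
noncomputable def vol1 : ℝ := (volume (Metric.closedBall (0 : E3) 1)).toReal

lemma vol1_pos : 0 < vol1 :=
  ENNReal.toReal_pos (Metric.measure_closedBall_pos volume _ one_pos).ne' measure_closedBall_lt_top.ne

lemma vol_eq (X : E3) (d : ℝ) (hd : 0 < d) :
    (volume (Metric.closedBall X d)).toReal = d ^ 3 * vol1 := by
  rw [Measure.addHaar_closedBall' _ _ hd.le]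
  simp [vol1, ENNReal.toReal_mul, hd.le]

/-- key estimate -/
lemma kern_est (c : E3) (d : ℝ) (hd : 0 < d) :
    ∫ z in Metric.closedBall c d, (‖z‖ ^ 2)⁻¹ ≤
      (20 * kap + 5 * vol1) * d ^ 3 / (‖c‖ ^ 2 + d ^ 2) := by
  have hk := kap_nonneg
  have hv := vol1_pos
  have hc := norm_nonneg c
  rcases le_total ‖c‖ (2 * d) with h | h
  · calc _ ≤ ∫ z in Metric.closedBall (0 : E3) (3 * d), (‖z‖ ^ 2)⁻¹ := by
          refine setIntegral_mono_set (kern_int 0 _) (ae_of_all _ fun z => by simp only [Pi.zero_apply]; positivity) ?_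
          refine (Metric.closedBall_subset_closedBall' ?_).eventuallyLE
          rw [dist_zero_right]; linarith
      _ = kap * (3 * d) := kern_ball _ (by linarith)
      _ ≤ _ := by
          rw [le_div_iff₀ (by positivity)]
          have : ‖c‖ ^ 2 ≤ 4 * d ^ 2 := by nlinarith
          have h2 : kap * (3 * d) * (‖c‖ ^ 2 + d ^ 2) ≤ kap * (3 * d) * (5 * d ^ 2) := by
            gcongr; linarith
          have h3 : 0 ≤ kap * d ^ 3 := by positivity
          have h4 : 0 ≤ vol1 * d ^ 3 := by positivity
          nlinarith
  · calc _ ≤ ∫ z in Metric.closedBall c d, ((‖c‖ / 2) ^ 2)⁻¹ := by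
          refine setIntegral_mono_on (kern_int c d)
            (integrableOn_const measure_closedBall_lt_top.ne)
            measurableSet_closedBall fun z hz => ?_
          rw [Metric.mem_closedBall, dist_eq_norm] at hz
          have : ‖c‖ / 2 ≤ ‖z‖ := by
            have := norm_sub_le z (z - c)
            rw [sub_sub_cancel] at this
            linarith
          have : 0 < ‖c‖ / 2 := by linarith
          gcongr
      _ = d ^ 3 * vol1 * ((‖c‖ / 2) ^ 2)⁻¹ := by
          rw [setIntegral_const, smul_eq_mul, Measure.real, vol_eq c d hd]
      _ ≤ _ := by
          have hc0 : 0 < ‖c‖ := by linarith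
          rw [le_div_iff₀ (by positivity)]
          have h2 : ((‖c‖ / 2) ^ 2)⁻¹ * (‖c‖ ^ 2 + d ^ 2) ≤ 5 := by
            rw [inv_mul_le_iff₀ (by positivity)]
            nlinarith
          have h3 : 0 ≤ kap * d ^ 3 := by positivity
          calc _ = d ^ 3 * vol1 * (((‖c‖ / 2) ^ 2)⁻¹ * (‖c‖ ^ 2 + d ^ 2)) := by ring
            _ ≤ d ^ 3 * vol1 * 5 := by gcongr
            _ ≤ _ := by nlinarith

lemma stokes_eq (d : ℝ) (hd : 0 < d) (X F x : E3) : smearedStokeslet d X F x =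
    (d ^ 3 * vol1)⁻¹ • ∫ z in Metric.closedBall (x - X) d, oseen z F := by
  rw [smearedStokeslet, vol_eq X d hd, change_var (fun z => oseen z F)]

lemma stokes_deriv (d : ℝ) (hd : 0 < d) (X F x : E3) : HasFDerivAt (smearedStokeslet d X F)
    ((d ^ 3 * vol1)⁻¹ • ∫ z in Metric.closedBall (x - X) d, fderiv ℝ (fun z => oseen z F) z) x := by
  have h := main_deriv F (x - X) d
  have h2 : HasFDerivAt (fun x' : E3 => x' - x) (ContinuousLinearMap.id ℝ E3) x :=
    (hasFDerivAt_id x).sub_const x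
  have h3 : HasFDerivAt (fun h => ∫ z in Metric.closedBall (x - X) d, oseen (z + h) F)
      (∫ z in Metric.closedBall (x - X) d, fderiv ℝ (fun z => oseen z F) z) (x - x) := by
    rwa [sub_self]
  have h4 := (HasFDerivAt.comp (f := fun x' : E3 => x' - x) x h3 h2).const_smul ((d ^ 3 * vol1)⁻¹)
  rw [ContinuousLinearMap.comp_id] at h4
  refine h4.congr_of_eventuallyEq (Eventually.of_forall fun x' => ?_)
  simp only [smearedStokeslet, vol_eq X d hd, Pi.smul_apply, Function.comp]
  congr 1
  rw [← change_var (fun z => oseen (z + (x' - x)) F)]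
  congr 1
  ext y : 1
  congr 2
  abel

/-- Decay estimates for a smeared Stokeslet of strength `F` on a ball of radius `d`:
`|w(x)| ≤ C|F|/(|x−X|+d)`, `w` is differentiable, and `‖Dw(x)‖ ≤ C|F|/(|x−X|²+d²)`. -/
theorem smearedStokeslet_decay :
    ∃ C : ℝ, 0 < C ∧
      ∀ (d : ℝ), 0 < d → ∀ X F : E3,
        (∀ x : E3, ‖smearedStokeslet d X F x‖ ≤ C * ‖F‖ / (‖x - X‖ + d)) ∧
        Differentiable ℝ (smearedStokeslet d X F) ∧
        (∀ x : E3, ‖fderiv ℝ (smearedStokeslet d X F) x‖ ≤ C * ‖F‖ / (‖x - X‖ ^ 2 + d ^ 2)) := by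
  have hk := kap_nonneg
  have hv := vol1_pos
  refine ⟨2 * ((20 * kap + 5 * vol1) / vol1), by positivity, fun d hd X F => ⟨fun x => ?_,
    fun x => (stokes_deriv d hd X F x).differentiableAt, fun x => ?_⟩⟩
  · rw [stokes_eq d hd, norm_smul, Real.norm_eq_abs, abs_of_pos (by positivity)]
    have hk := kern_est (x - X) d hd
    have hc := norm_nonneg (x - X)
    have h1 : ‖∫ z in Metric.closedBall (x - X) d, oseen z F‖ ≤
        ∫ z in Metric.closedBall (x - X) d, ‖F‖ * (‖x - X‖ + d) * (‖z‖ ^ 2)⁻¹ := by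
      refine norm_integral_le_of_norm_le ((kern_int _ _).const_mul _) ?_
      filter_upwards [ae_restrict_mem measurableSet_closedBall, ae_restrict_of_ae ae_ne_zero']
        with z hz hz0
      refine (oseen_bound F z).trans ?_
      rw [mul_assoc]
      gcongr
      have p := norm_pos_iff.2 hz0
      rw [Metric.mem_closedBall, dist_eq_norm] at hz
      have : ‖z‖ ≤ ‖x - X‖ + d := by
        have := norm_add_le (x - X) (z - (x - X))
        rw [add_sub_cancel] at this
        linarith
      calc ‖z‖⁻¹ = ‖z‖ * (‖z‖ ^ 2)⁻¹ := by field_simp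
        _ ≤ _ := by gcongr
    rw [integral_const_mul] at h1
    have h2 : (‖x - X‖ + d) / (‖x - X‖ ^ 2 + d ^ 2) ≤ 2 / (‖x - X‖ + d) := by
      rw [div_le_div_iff₀ (by positivity) (by positivity)]
      nlinarith [sq_nonneg (‖x - X‖ - d)]
    calc _ ≤ (d ^ 3 * vol1)⁻¹ * (‖F‖ * (‖x - X‖ + d) *
          ((20 * kap + 5 * vol1) * d ^ 3 / (‖x - X‖ ^ 2 + d ^ 2))) := by
          gcongr
          exact h1.trans (by gcongr)
      _ = ((20 * kap + 5 * vol1) / vol1) * ‖F‖ * ((‖x - X‖ + d) / (‖x - X‖ ^ 2 + d ^ 2)) := by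
          field_simp
      _ ≤ ((20 * kap + 5 * vol1) / vol1) * ‖F‖ * (2 / (‖x - X‖ + d)) := by gcongr
      _ = _ := by ring
  · rw [(stokes_deriv d hd X F x).fderiv, norm_smul, Real.norm_eq_abs, abs_of_pos (by positivity)]
    have hk := kern_est (x - X) d hd
    have h1 : ‖∫ z in Metric.closedBall (x - X) d, fderiv ℝ (fun z => oseen z F) z‖ ≤
        ∫ z in Metric.closedBall (x - X) d, 2 * ‖F‖ * (‖z‖ ^ 2)⁻¹ := by
      refine norm_integral_le_of_norm_le ((kern_int _ _).const_mul _) ?_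
      filter_upwards [ae_restrict_of_ae ae_ne_zero'] with z hz0
      exact oseen_fderiv F z hz0
    rw [integral_const_mul] at h1
    calc _ ≤ (d ^ 3 * vol1)⁻¹ * (2 * ‖F‖ *
          ((20 * kap + 5 * vol1) * d ^ 3 / (‖x - X‖ ^ 2 + d ^ 2))) := by
          gcongr
          exact h1.trans (by gcongr)
      _ = _ := by
          field_simp
end
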